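/- Let n ≥ 2 be an integer and let p = 2m + 1 ≥ 3 be an odd integer. Then for every k ≥ 0, gcd(s_k(n), s_m(n)) = 1 if and only if gcd(m − k, p) = 1 (where m − k is taken as an integer). -/

import Mathlib

/-!
Writing `n = x + 1/x`, one has `s_k(n) = (x^(2k+1) - 1) / (x^k (x - 1))`, so the `s_k` behave like
the repunits indexed by the odd numbers `2k+1`: `gcd(s_k, s_m) = |s_j|` with
`2j + 1 = gcd(2k+1, 2m+1)` (`gcd_s`). This is proved by a Euclidean descent replacing the larger
odd index `a` by `|a - 2b|`, which is justified by the two identities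
`s_{d+2i} + s_d = T_i s_{d+i}` and `s_{2m+1+d} - s_d = T_{m+d+1} s_m`.
For `n ≥ 2` the sequence is strictly increasing from `s_0 = 1`, so `|s_j| = 1` exactly when `j = 0`,
that is, when `2k+1` and `2m+1` are coprime; and `2(m-k) = (2m+1) - (2k+1)` with `2m+1` odd
gives `gcd(m-k, 2m+1) = gcd(2k+1, 2m+1)`.
-/

/-- The sequence `s_k(n)`: `s_0 = 1`, `s_1 = n + 1`, `s_{k+2} = n·s_{k+1} − s_k`. -/
def s (n : ℤ) : ℕ → ℤ
  | 0 => 1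
  | 1 => n + 1
  | k + 2 => n * s n (k + 1) - s n k

/-- The sequence `r_k(n)`: `r_0 = 1`, `r_1 = n − 1`, `r_{k+2} = n·r_{k+1} − r_k`. -/
def r (n : ℤ) : ℕ → ℤ
  | 0 => 1
  | 1 => n - 1
  | k + 2 => n * r n (k + 1) - r n k

/-- Dilated Chebyshev polynomials of the first kind: `T_0 = 2`, `T_1 = n`. -/
def T (n : ℤ) : ℕ → ℤ
  | 0 => 2
  | 1 => n
  | k + 2 => n * T n (k + 1) - T n k

/-- Dilated Chebyshev polynomials of the second kind: `U_0 = 1`, `U_1 = n`. -/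
def U (n : ℤ) : ℕ → ℤ
  | 0 => 1
  | 1 => n
  | k + 2 => n * U n (k + 1) - U n k

theorem s_add_two (n : ℤ) (k : ℕ) : s n (k + 2) = n * s n (k + 1) - s n k := by rw [s]

theorem T_add_two (n : ℤ) (k : ℕ) : T n (k + 2) = n * T n (k + 1) - T n k := by rw [T]

/-- Reflection of the sequence about the index `d + i`. -/
theorem s_reflect (n : ℤ) (i : ℕ) :
    ∀ d, s n (d + 2 * i) + s n d = T n i * s n (d + i) := by
  induction i using Nat.twoStepInduction with
  | zero => intro d; simp [T]; ring
  | one => intro d; simp [T, s_add_two]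
  | more i h0 h1 =>
    intro d
    have e0 := h0 (d + 2)
    have e1 := h1 (d + 1)
    have r1 := s_add_two n (d + 2 * i + 2)
    have r2 := s_add_two n d
    rw [T_add_two]
    ring_nf at *
    linear_combination n * e1 - e0 + r1 + r2

theorem s_succ_sub (n : ℤ) (d : ℕ) : s n (d + 1) - s n d = T n (d + 1) := by
  induction d using Nat.twoStepInduction with
  | zero => simp [s, T]
  | one => simp [s, T]; ring
  | more d h0 h1 =>
    rw [s_add_two n (d + 1), T_add_two n (d + 1)]
    linear_combination n * h1 - h0 - s_add_two n d

/-- The same reflection as `s_reflect` when the mirror index `-1 - d` is negative,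
where the sequence is extended by `s_{-1-d} = -s_d`. -/
theorem s_shift (n : ℤ) (m : ℕ) :
    ∀ d, s n (2 * m + 1 + d) - s n d = T n (m + d + 1) * s n m := by
  induction m using Nat.twoStepInduction with
  | zero =>
    intro d
    have := s_succ_sub n d
    simp only [s]
    ring_nf at *
    linear_combination this
  | one =>
    intro d
    have e0 := s_succ_sub n d
    have e1 := s_succ_sub n (d + 1)
    have e2 := s_succ_sub n (d + 2)
    have r := T_add_two n (d + 1)
    simp only [s]
    ring_nf at *
    linear_combination e0 + e1 + e2 + r
  | more m h0 h1 =>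
    intro d
    have e0 := h0 (d + 2)
    have e1 := h1 (d + 1)
    have r1 := s_add_two n (2 * m + d + 3)
    have r2 := s_add_two n d
    rw [s_add_two n m]
    ring_nf at *
    linear_combination n * e1 - e0 + r1 - r2

theorem gcd_s_reflect (n : ℤ) (d i : ℕ) :
    Int.gcd (s n (d + 2 * i)) (s n (d + i)) = Int.gcd (s n d) (s n (d + i)) := by
  have h : s n (d + 2 * i) = -s n d + s n (d + i) * T n i := by
    linear_combination s_reflect n i d
  rw [h, Int.gcd_add_mul_left_left, Int.neg_gcd]

theorem gcd_s_shift (n : ℤ) (m d : ℕ) :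
    Int.gcd (s n (2 * m + 1 + d)) (s n m) = Int.gcd (s n d) (s n m) := by
  have h : s n (2 * m + 1 + d) = s n d + s n m * T n (m + d + 1) := by
    linear_combination s_shift n m d
  rw [h, Int.gcd_add_mul_left_left]

theorem odd_gcd_reflect (d i : ℕ) :
    Nat.gcd (2 * (d + 2 * i) + 1) (2 * (d + i) + 1) = Nat.gcd (2 * d + 1) (2 * (d + i) + 1) := by
  have h : ((2 * (d + 2 * i) + 1 : ℕ) : ℤ)
      = -((2 * d + 1 : ℕ) : ℤ) + ((2 * (d + i) + 1 : ℕ) : ℤ) * 2 := by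
    push_cast; ring
  rw [← Int.gcd_natCast_natCast, h, Int.gcd_add_mul_left_left, Int.neg_gcd,
    Int.gcd_natCast_natCast]

theorem odd_gcd_shift (m d : ℕ) :
    Nat.gcd (2 * (2 * m + 1 + d) + 1) (2 * m + 1) = Nat.gcd (2 * d + 1) (2 * m + 1) := by
  have h : 2 * (2 * m + 1 + d) + 1 = 2 * d + 1 + (2 * m + 1) * 2 := by ring
  rw [h, Nat.gcd_add_mul_left_left]

/-- Since `gcd(2k+1, 2m+1)` is odd, the index `gcd / 2` is the `j` with `2j + 1 = gcd`. -/
theorem gcd_s (n : ℤ) (k m : ℕ) :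
    Int.gcd (s n k) (s n m) = (s n (Nat.gcd (2 * k + 1) (2 * m + 1) / 2)).natAbs := by
  induction hN : k + m using Nat.strong_induction_on generalizing k m with
  | _ N ih =>
    subst hN
    wlog hkm : m ≤ k generalizing k m
    · rw [Int.gcd_comm, Nat.gcd_comm]
      exact this m k (fun N' h k' m' e => ih N' (by omega) k' m' e) (by omega)
    rcases hkm.eq_or_lt with rfl | hlt
    · have h : (2 * m + 1) / 2 = m := by omega
      rw [Nat.gcd_self, h, Int.gcd_self]
    by_cases h2 : k ≤ 2 * m
    · obtain ⟨i, rfl⟩ := Nat.exists_eq_add_of_le hkm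
      obtain ⟨d, rfl⟩ := Nat.exists_eq_add_of_le' (show i ≤ m by omega)
      have e : d + i + i = d + 2 * i := by ring
      rw [e, gcd_s_reflect, odd_gcd_reflect]
      exact ih _ (by omega) d (d + i) rfl
    · obtain ⟨d, rfl⟩ := Nat.exists_eq_add_of_le (show 2 * m + 1 ≤ k by omega)
      rw [gcd_s_shift, odd_gcd_shift]
      exact ih _ (by omega) d m rfl

theorem s_growth (n : ℤ) (hn : 2 ≤ n) (k : ℕ) : 1 ≤ s n k ∧ s n k < s n (k + 1) := by
  induction k with
  | zero => simp [s]; omega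
  | succ k ih =>
    rw [s_add_two]
    constructor
    · omega
    · nlinarith [ih.1, ih.2]

theorem natAbs_s_eq_one_iff (n : ℤ) (hn : 2 ≤ n) (j : ℕ) : (s n j).natAbs = 1 ↔ j = 0 := by
  cases j with
  | zero => simp [s]
  | succ j => have := s_growth n hn j; omega

theorem gcd_sub_eq (m k : ℕ) :
    Int.gcd ((m : ℤ) - (k : ℤ)) (2 * (m : ℤ) + 1) = Nat.gcd (2 * k + 1) (2 * m + 1) := by
  have hc : IsCoprime (2 : ℤ) (2 * (m : ℤ) + 1) := ⟨-m, 1, by ring⟩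
  have h : ((2 * k + 1 : ℕ) : ℤ) = -(2 * ((m : ℤ) - k)) + (2 * (m : ℤ) + 1) * 1 := by
    push_cast; ring
  have h' : ((2 * m + 1 : ℕ) : ℤ) = 2 * (m : ℤ) + 1 := by push_cast; ring
  rw [← Int.gcd_natCast_natCast, h, h', Int.gcd_add_mul_left_left, Int.neg_gcd]
  exact (Int.gcd_mul_right_left_of_gcd_eq_one (Int.isCoprime_iff_gcd_eq_one.1 hc)).symm

theorem s_coprimality (n : ℤ) (hn : 2 ≤ n) (m : ℕ) (hm : 1 ≤ m) (k : ℕ) :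
    Int.gcd (s n k) (s n m) = 1 ↔ Int.gcd ((m : ℤ) - (k : ℤ)) (2 * (m : ℤ) + 1) = 1 := by
  rw [gcd_s, natAbs_s_eq_one_iff n hn, gcd_sub_eq]
  have hpos : 0 < Nat.gcd (2 * k + 1) (2 * m + 1) := Nat.gcd_pos_of_pos_left _ (by omega)
  omega
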